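/- arXiv:1806.02214 — 4 statements merged into one kernel-verified Lean document; each statement's English description precedes it below -/
import Mathlib

section
/- Let E be a Banach space, T > 0, and let K be a Volterra kernel on [0,T] satisfying Condition (A) with exponent α ∈ [0, 1/4). If φ: [0,T] → E is λ-Hölder continuous with λ > α, then for every s ∈ (0,T) the integral ∫_s^T [φ(r) − φ(s)] (∂K(r,s)/∂r) dr converges absolutely (so K*φ is well-defined on (0,T)), and moreover ∫_0^T ‖(K*φ)(s)‖_E² ds < ∞, i.e., K*φ ∈ L²([0,T]; E). -/
open MeasureTheory Set

noncomputable section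

namespace YS

variable {E : Type*} [NormedAddCommGroup E] [NormedSpace ℝ E]

/-- A Volterra kernel: a measurable `K : ℝ² → ℝ` with `K t s = 0` whenever `s ≥ t`. -/
def IsVolterraKernel (K : ℝ → ℝ → ℝ) : Prop :=
  Measurable (Function.uncurry K) ∧ ∀ t s : ℝ, t ≤ s → K t s = 0

/-- Condition (A) with exponent `α` and constant `C`; here `K' t s` denotes the partial
derivative `∂K(t,s)/∂t`, whose existence is part of the condition. -/
def CondA (T α C : ℝ) (K K' : ℝ → ℝ → ℝ) : Prop :=
  (∀ s t : ℝ, 0 < s → s < t → t ≤ T → |K t s| ≤ C * s ^ (-α) * (t - s) ^ (-α)) ∧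
  ∀ s t : ℝ, 0 < s → s < t → t ≤ T →
    HasDerivAt (fun r => K r s) (K' t s) t ∧ |K' t s| ≤ C * (t - s) ^ (-(α + 1))

/-- The operator `𝒦*`:  `(𝒦*φ)(s) = φ(s)K(T,s) + ∫_s^T [φ(r) − φ(s)] ∂K(r,s)/∂r dr`. -/
def Kstar (T : ℝ) (K K' : ℝ → ℝ → ℝ) (φ : ℝ → E) (s : ℝ) : E :=
  K T s • φ s + ∫ r in s..T, K' r s • (φ r - φ s)

/-- The operator `A^K`. -/
def AK (T : ℝ) (K' : ℝ → ℝ → ℝ) (φ : ℝ → E) (s : ℝ) : E :=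
  ∫ r in s..T, K' r s • (φ r - φ s)

/-- Rectangular increment `f(u₁,u₂;v₁,v₂)`. -/
def rectInc (ψ : ℝ → ℝ → E) (u₁ u₂ v₁ v₂ : ℝ) : E :=
  ψ u₁ v₁ + ψ u₂ v₂ - ψ u₁ v₂ - ψ u₂ v₁

/-- The operator `B^K`. -/
def BK (T : ℝ) (K' : ℝ → ℝ → ℝ) (ψ : ℝ → ℝ → E) (u v : ℝ) : E :=
  ∫ r₂ in v..T, ∫ r₁ in u..T, (K' r₁ u * K' r₂ v) • rectInc ψ u r₁ v r₂

/-- The operator `𝒦* ⊗ 𝒦*`. -/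
def KstarT (T : ℝ) (K K' : ℝ → ℝ → ℝ) (ψ : ℝ → ℝ → E) (u v : ℝ) : E :=
  (K T u * K T v) • ψ u v + K T v • AK T K' (fun x => ψ x v) u +
    K T u • AK T K' (fun y => ψ u y) v + BK T K' ψ u v

/-- A partition `0 = s₀ < s₁ < ⋯ < s_n = T` of `[0,T]`. -/
structure Partition (T : ℝ) where
  n : ℕ
  pts : ℕ → ℝ
  n_pos : 0 < n
  first : pts 0 = 0
  last : pts n = T
  lt : ∀ i < n, pts i < pts (i + 1)

/-- Mesh of a partition: the largest increment. -/
def Partition.mesh {T : ℝ} (P : Partition T) : ℝ :=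
  (Finset.range P.n).sup' (Finset.nonempty_range_iff.mpr P.n_pos.ne')
    fun i => P.pts (i + 1) - P.pts i

/-- One-dimensional step approximation `φ^π`. -/
def step1 {T : ℝ} (P : Partition T) (φ : ℝ → E) (s : ℝ) : E :=
  ∑ i ∈ Finset.range P.n,
    (Set.Ico (P.pts i) (P.pts (i + 1))).indicator (fun _ => φ (P.pts i)) s

/-- Two-dimensional step approximation `ψ^π` for the grid partition `P × Q`. -/
def step2 {T : ℝ} (P Q : Partition T) (ψ : ℝ → ℝ → E) (u v : ℝ) : E :=
  ∑ i ∈ Finset.range P.n, ∑ j ∈ Finset.range Q.n,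
    ((Set.Ico (P.pts i) (P.pts (i + 1))) ×ˢ (Set.Ico (Q.pts j) (Q.pts (j + 1)))).indicator
      (fun _ => ψ (P.pts i) (Q.pts j)) (u, v)

/-- `λ`-Hölder continuity on `[0,T]` with constant `C`. -/
def IsHolderWith (T lam C : ℝ) (φ : ℝ → E) : Prop :=
  ∀ t₁ ∈ Icc (0:ℝ) T, ∀ t₂ ∈ Icc (0:ℝ) T, ‖φ t₁ - φ t₂‖ ≤ C * |t₁ - t₂| ^ lam

/-- `λ`-Hölder continuity on `[0,T]`. -/
def IsHolder (T lam : ℝ) (φ : ℝ → E) : Prop := ∃ C : ℝ, IsHolderWith T lam C φ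

/-- `λ`-Hölder bi-continuity with constant `C`. -/
def IsHolderBiWith (T lam C : ℝ) (ψ : ℝ → ℝ → E) : Prop :=
  (∀ u₁ ∈ Icc (0:ℝ) T, ∀ u₂ ∈ Icc (0:ℝ) T, ∀ v ∈ Icc (0:ℝ) T,
      ‖ψ u₂ v - ψ u₁ v‖ ≤ C * |u₂ - u₁| ^ lam) ∧
  ∀ u ∈ Icc (0:ℝ) T, ∀ v₁ ∈ Icc (0:ℝ) T, ∀ v₂ ∈ Icc (0:ℝ) T,
      ‖ψ u v₂ - ψ u v₁‖ ≤ C * |v₂ - v₁| ^ lam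

/-- `λ`-Hölder bi-continuity. -/
def IsHolderBi (T lam : ℝ) (ψ : ℝ → ℝ → E) : Prop := ∃ C : ℝ, IsHolderBiWith T lam C ψ

/-- Strong `λ`-Hölder bi-continuity with constant `C`. -/
def IsStrongHolderBiWith (T lam C : ℝ) (ψ : ℝ → ℝ → E) : Prop :=
  IsHolderBiWith T lam C ψ ∧
  ∀ u₁ ∈ Icc (0:ℝ) T, ∀ u₂ ∈ Icc (0:ℝ) T, ∀ v₁ ∈ Icc (0:ℝ) T, ∀ v₂ ∈ Icc (0:ℝ) T,
    ‖rectInc ψ u₁ u₂ v₁ v₂‖ ≤ C * |u₂ - u₁| ^ lam * |v₂ - v₁| ^ lam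

/-- Strong `λ`-Hölder bi-continuity. -/
def IsStrongHolderBi (T lam : ℝ) (ψ : ℝ → ℝ → E) : Prop :=
  ∃ C : ℝ, IsStrongHolderBiWith T lam C ψ

/-- The covariance function `R(s,t) = ∫_0^{s∧t} K(t,r)K(s,r) dr` of the Volterra process. -/
def covR (K : ℝ → ℝ → ℝ) (s t : ℝ) : ℝ := ∫ r in (0:ℝ)..(min s t), K t r * K s r

/-- The 2D Riemann–Stieltjes sum of `f` against `g` over the grid partition `P × Q`. -/
def RSsum {T : ℝ} (P Q : Partition T) (f g : ℝ → ℝ → ℝ) : ℝ :=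
  ∑ i ∈ Finset.range P.n, ∑ j ∈ Finset.range Q.n,
    f (P.pts i) (Q.pts j) *
      rectInc g (P.pts i) (P.pts (i + 1)) (Q.pts j) (Q.pts (j + 1))

lemma aux_intble (a b p : ℝ) (hp : -1 < p) :
    IntervalIntegrable (fun r : ℝ => (r - a) ^ p) volume a b := by
  have h := (intervalIntegral.intervalIntegrable_rpow' (a := a - a) (b := b - a) hp).comp_sub_right a
  simpa using h

lemma aux_finite {S : Set ℝ} (hS : MeasurableSet S) (f : ℝ → ENNReal) (g : ℝ → ℝ)
    (hg : IntegrableOn g S) (h : ∀ x ∈ S, f x ≤ ENNReal.ofReal (g x)) :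
    ∫⁻ x in S, f x < ⊤ := by
  refine lt_of_le_of_lt (setLIntegral_mono' hS h) ?_
  refine lt_of_le_of_lt (lintegral_mono fun x => ?_) hg.2
  exact Real.ofReal_le_enorm _

/-- for `λ`-Hölder `φ` with `λ > α`, the integral defining `𝒦*φ`
converges absolutely on `(0,T)` and `𝒦*φ ∈ L²([0,T]; E)`. -/
theorem kstar_mem_L2 {E : Type*} [NormedAddCommGroup E] [NormedSpace ℝ E] [CompleteSpace E]
    (T α lam : ℝ) (hT : 0 < T) (hα : 0 ≤ α) (hα' : α < 1 / 4)
    (K K' : ℝ → ℝ → ℝ) (hK : IsVolterraKernel K) (hA : ∃ C : ℝ, CondA T α C K K')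
    (φ : ℝ → E) (hlam : 0 < lam) (hlam' : lam ≤ 1)
    (hφ : IsHolder T lam φ) (hαlam : α < lam) :
    (∀ s ∈ Ioo (0:ℝ) T,
      (∫⁻ r in Ioc s T, (‖K' r s • (φ r - φ s)‖₊ : ENNReal)) < ⊤) ∧
    (∫⁻ s in Icc (0:ℝ) T, (‖Kstar T K K' φ s‖₊ : ENNReal) ^ 2) < ⊤ := by
  obtain ⟨C, hC1, hC2⟩ := hA
  obtain ⟨D, hD⟩ := hφ
  have hb : ∀ s ∈ Ioo (0:ℝ) T, ∀ r ∈ Ioc s T,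
      ‖K' r s • (φ r - φ s)‖ ≤ |C| * |D| * (r - s) ^ (lam - α - 1) := by
    intro s hs r hr
    have hrs : 0 < r - s := sub_pos.2 hr.1
    have h1 := (hC2 s r hs.1 hr.1 hr.2).2
    have h2 := hD r ⟨(hs.1.trans hr.1).le, hr.2⟩ s ⟨hs.1.le, hs.2.le⟩
    rw [abs_of_pos hrs] at h2
    have h1' : |K' r s| ≤ |C| * (r - s) ^ (-(α + 1)) :=
      h1.trans (mul_le_mul_of_nonneg_right (le_abs_self C) (by positivity))
    have h2' : ‖φ r - φ s‖ ≤ |D| * (r - s) ^ lam :=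
      h2.trans (mul_le_mul_of_nonneg_right (le_abs_self D) (by positivity))
    rw [norm_smul, Real.norm_eq_abs]
    calc |K' r s| * ‖φ r - φ s‖
        ≤ (|C| * (r - s) ^ (-(α + 1))) * (|D| * (r - s) ^ lam) :=
          mul_le_mul h1' h2' (norm_nonneg _) (by positivity)
      _ = |C| * |D| * ((r - s) ^ (-(α + 1)) * (r - s) ^ lam) := by ring
      _ = _ := by
          rw [← Real.rpow_add hrs]
          congr 2
          ring
  have hint : ∀ s, IntervalIntegrable
      (fun r : ℝ => |C| * |D| * (r - s) ^ (lam - α - 1)) volume s T := fun s =>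
    (aux_intble s T _ (by linarith)).const_mul _
  constructor
  · intro s hs
    refine aux_finite measurableSet_Ioc _ _
      ((intervalIntegrable_iff_integrableOn_Ioc_of_le hs.2.le).1 (hint s)) ?_
    intro r hr
    have := hb s hs r hr
    rw [← enorm_eq_nnnorm, ← ofReal_norm_eq_enorm]
    exact ENNReal.ofReal_le_ofReal this
  · rw [← restrict_Ioo_eq_restrict_Icc]
    set B : ℝ := |C| * |D| * (T ^ (lam - α) / (lam - α)) with hB
    set M : ℝ := ‖φ 0‖ + |D| * T ^ lam with hM
    have hβ : 0 < lam - α := sub_pos.2 hαlam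
    have hM0 : 0 ≤ M := by positivity
    have hB0 : 0 ≤ B := by positivity
    have hI : ∀ s ∈ Ioo (0:ℝ) T, ‖∫ r in s..T, K' r s • (φ r - φ s)‖ ≤ B := by
      intro s hs
      refine (intervalIntegral.norm_integral_le_of_norm_le hs.2.le
        (Filter.Eventually.of_forall (hb s hs)) (hint s)).trans ?_
      rw [intervalIntegral.integral_const_mul,
        intervalIntegral.integral_comp_sub_right (fun x : ℝ => x ^ (lam - α - 1)) s,
        integral_rpow (Or.inl (by linarith)), hB]
      simp only [sub_self, sub_add_cancel]
      rw [Real.zero_rpow hβ.ne', sub_zero]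
      have : (T - s) ^ (lam - α) ≤ T ^ (lam - α) :=
        Real.rpow_le_rpow (by linarith [hs.2]) (by linarith [hs.1]) hβ.le
      gcongr
    have hφb : ∀ s ∈ Ioo (0:ℝ) T, ‖φ s‖ ≤ M := by
      intro s hs
      have h := hD s ⟨hs.1.le, hs.2.le⟩ 0 ⟨le_rfl, hT.le⟩
      rw [sub_zero, abs_of_pos hs.1] at h
      have h3 : s ^ lam ≤ T ^ lam := Real.rpow_le_rpow hs.1.le hs.2.le hlam.le
      have h0 : (0:ℝ) ≤ s ^ lam := Real.rpow_nonneg hs.1.le _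
      have h4 : D * s ^ lam ≤ |D| * T ^ lam :=
        mul_le_mul (le_abs_self D) h3 h0 (abs_nonneg D)
      have h5 : ‖φ s‖ ≤ ‖φ 0‖ + ‖φ s - φ 0‖ := norm_le_norm_add_norm_sub' _ _
      rw [hM]
      linarith
    refine aux_finite measurableSet_Ioo _
      (fun s => 2 * (|C| * M) ^ 2 * (s ^ (-α * 4) + (T - s) ^ (-α * 4)) + 2 * B ^ 2) ?_ ?_
    · rw [← intervalIntegrable_iff_integrableOn_Ioo_of_le hT.le]
      refine IntervalIntegrable.add (IntervalIntegrable.const_mul (IntervalIntegrable.add ?_ ?_) _)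
        intervalIntegrable_const
      · exact intervalIntegral.intervalIntegrable_rpow' (by linarith)
      · have h := (intervalIntegral.intervalIntegrable_rpow' (a := T - 0) (b := T - T)
          (r := -α * 4) (by linarith)).comp_sub_left T
        simpa using h
    · intro s hs
      have hTs : 0 < T - s := sub_pos.2 hs.2
      rw [← enorm_eq_nnnorm, ← ofReal_norm_eq_enorm, ← ENNReal.ofReal_pow (norm_nonneg _)]
      apply ENNReal.ofReal_le_ofReal
      have e : ∀ x : ℝ, 0 < x → x ^ (-α * 4) = (x ^ (-α)) ^ 4 := by
        intro x hx
        rw [Real.rpow_mul hx.le]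
        exact_mod_cast Real.rpow_natCast (x ^ (-α)) 4
      rw [e s hs.1, e _ hTs]
      have hx : 0 < s ^ (-α) := Real.rpow_pos_of_pos hs.1 _
      have hy : 0 < (T - s) ^ (-α) := Real.rpow_pos_of_pos hTs _
      have hk := hC1 s T hs.1 hs.2 le_rfl
      generalize s ^ (-α) = x at *
      generalize (T - s) ^ (-α) = y at *
      have hk' : |K T s| ≤ |C| * x * y := hk.trans (by gcongr; exact le_abs_self C)
      have hn : ‖Kstar T K K' φ s‖ ≤ (|C| * M) * (x * y) + B := by
        unfold Kstar
        refine (norm_add_le _ _).trans (add_le_add ?_ (hI s hs))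
        rw [norm_smul, Real.norm_eq_abs]
        calc _ ≤ (|C| * x * y) * M := mul_le_mul hk' (hφb s hs) (norm_nonneg _) (by positivity)
          _ = _ := by ring
      have h1 : ‖Kstar T K K' φ s‖ ^ 2 ≤ ((|C| * M) * (x * y) + B) ^ 2 := by gcongr
      have h2 : (x * y) ^ 2 ≤ x ^ 4 + y ^ 4 := by
        nlinarith [sq_nonneg (x ^ 2 - y ^ 2), sq_nonneg (x ^ 2), sq_nonneg (y ^ 2)]
      have h3 := mul_le_mul_of_nonneg_left h2 (by positivity : 0 ≤ 2 * (|C| * M) ^ 2)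
      show _ ≤ 2 * (|C| * M) ^ 2 * (x ^ 4 + y ^ 4) + 2 * B ^ 2
      nlinarith [sq_nonneg ((|C| * M) * (x * y) - B)]

end YS
end
end

section
/- Let T > 0, let K be a Volterra kernel on [0,T] satisfying Condition (A) with exponent α ∈ [0, 1/4), such that for each s ∈ (0,T) and each a with s < a ≤ T one has K(T,s) − K(a,s) = ∫_a^T (∂K(r,s)/∂r) dr, and let R(s,t) := ∫_0^{min(s,t)} K(t,r) K(s,r) dr. Let φ: [0,T]² → ℝ be bounded, let π = {(u_i, v_j)} be a grid partition of [0,T]², and let φ^π(u,v) := Σ_{i,j} φ(u_i,v_j) 1_{[u_i,u_{i+1})}(u) 1_{[v_j,v_{j+1})}(v). Then the Riemann–Stieltjes sum satisfies Σ_{i,j} φ(u_i,v_j) R(u_i,u_{i+1}; v_j,v_{j+1}) = ∫_0^T (K*⊗K*)φ^π(r,r) dr. -/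
open MeasureTheory Set

noncomputable section

namespace YS

variable {E : Type*} [NormedAddCommGroup E] [NormedSpace ℝ E]

lemma ii_sum {a b : ℝ} {t : Finset ℕ} {F : ℕ → ℝ → ℝ}
    (h : ∀ i ∈ t, IntervalIntegrable (F i) volume a b) :
    IntervalIntegrable (fun x => ∑ i ∈ t, F i x) volume a b :=
  ⟨integrable_finsetSum t fun i hi => (h i hi).1, integrable_finsetSum t fun i hi => (h i hi).2⟩

/-- step function of `[c, ∞)` -/
def hv (c r : ℝ) : ℝ := if c ≤ r then 1 else 0

lemma ind_eq_hv (a b r : ℝ) (hab : a ≤ b) :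
    (Set.Ico a b).indicator (fun _ => (1:ℝ)) r = hv a r - hv b r := by
  unfold hv
  by_cases h1 : a ≤ r <;> by_cases h2 : b ≤ r
  · simp [h1, h2]
  · simp [h1, h2, not_le.mp h2]
  · exact absurd (hab.trans h2) h1
  · simp [h1, h2]

lemma K'_int (T α C : ℝ) (hα : 0 ≤ α) (K K' : ℝ → ℝ → ℝ) (hA : CondA T α C K K')
    (s c : ℝ) (hs : 0 < s) (hc : s < c) :
    IntegrableOn (fun r => K' r s) (Icc c T) := by
  have hm : AEStronglyMeasurable (fun r => K' r s) (volume.restrict (Icc c T)) := by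
    have h1 : Measurable (deriv (fun r => K r s)) := measurable_deriv _
    refine h1.aestronglyMeasurable.congr ?_
    filter_upwards [ae_restrict_mem measurableSet_Icc] with r hr
    exact (hA.2 s r hs (hc.trans_le hr.1) hr.2).1.deriv
  refine Integrable.mono' (g := fun _ => |C| * (c - s) ^ (-(α + 1))) ?_ hm ?_
  · exact integrableOn_const (by simp)
  · filter_upwards [ae_restrict_mem measurableSet_Icc] with r hr
    refine ((hA.2 s r hs (hc.trans_le hr.1) hr.2).2).trans ?_
    have h0 : 0 < c - s := sub_pos.mpr hc
    have h2 : (r - s) ^ (-(α + 1)) ≤ (c - s) ^ (-(α + 1)) :=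
      Real.rpow_le_rpow_of_nonpos h0 (by linarith [hr.1]) (by linarith)
    have h3 : 0 ≤ (r - s) ^ (-(α + 1)) := Real.rpow_nonneg (by linarith [hr.1]) _
    exact mul_le_mul (le_abs_self C) h2 h3 (abs_nonneg C)

lemma hv_int (T α C : ℝ) (hα : 0 ≤ α) (K K' : ℝ → ℝ → ℝ) (hK : IsVolterraKernel K)
    (hA : CondA T α C K K')
    (hFTC : ∀ s a : ℝ, 0 < s → s < a → a ≤ T → K T s - K a s = ∫ r in a..T, K' r s)
    (s c : ℝ) (hs : 0 < s) (hsT : s < T) (hcT : c ≤ T) :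
    IntervalIntegrable (fun r => K' r s * (hv c r - hv c s)) volume s T ∧
    ∫ r in s..T, K' r s * (hv c r - hv c s) = K T s * (1 - hv c s) - K c s := by
  rcases le_or_gt c s with h | h
  · have h0 : EqOn (fun r => K' r s * (hv c r - hv c s)) (fun _ => 0) (uIcc s T) := by
      intro r hr
      rw [uIcc_of_le hsT.le] at hr
      simp [hv, h, h.trans hr.1]
    constructor
    · rw [intervalIntegrable_congr (h0.mono uIoc_subset_uIcc)]
      simp
    · rw [intervalIntegral.integral_congr h0]
      simp [hv, h, hK.2 c s h]
  · have h0 : (fun r => K' r s * (hv c r - hv c s)) = (Ici c).indicator (fun r => K' r s) := by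
      funext r
      by_cases hr : c ≤ r <;> simp [hv, hr, h.not_ge]
    have hset : Ioc s T ∩ Ici c = Icc c T := by
      ext r
      simp only [mem_inter_iff, mem_Ioc, mem_Ici, mem_Icc]
      constructor
      · rintro ⟨⟨_, h2⟩, h3⟩
        exact ⟨h3, h2⟩
      · rintro ⟨h2, h3⟩
        exact ⟨⟨h.trans_le h2, h3⟩, h2⟩
    rw [h0]
    constructor
    · rw [intervalIntegrable_iff_integrableOn_Ioc_of_le hsT.le]
      unfold IntegrableOn
      rw [integrable_indicator_iff measurableSet_Ici, IntegrableOn,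
        Measure.restrict_restrict measurableSet_Ici, inter_comm, hset]
      exact K'_int T α C hα K K' hA s c hs h
    · rw [intervalIntegral.integral_of_le hsT.le, setIntegral_indicator measurableSet_Ici, hset,
        integral_Icc_eq_integral_Ioc, ← intervalIntegral.integral_of_le hcT, ← hFTC s c hs h hcT]
      simp [hv, h.not_ge]

lemma ind_int (T α C : ℝ) (hα : 0 ≤ α) (K K' : ℝ → ℝ → ℝ) (hK : IsVolterraKernel K)
    (hA : CondA T α C K K')
    (hFTC : ∀ s a : ℝ, 0 < s → s < a → a ≤ T → K T s - K a s = ∫ r in a..T, K' r s)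
    (s a b : ℝ) (hs : 0 < s) (hsT : s < T) (hab : a ≤ b) (hbT : b ≤ T)
    (f : ℝ → ℝ) (hf : f = (Set.Ico a b).indicator (fun _ => (1:ℝ))) :
    IntervalIntegrable (fun r => K' r s * (f r - f s)) volume s T ∧
    K T s * f s + ∫ r in s..T, K' r s * (f r - f s) = K b s - K a s := by
  obtain ⟨a1, a2⟩ := hv_int T α C hα K K' hK hA hFTC s a hs hsT (hab.trans hbT)
  obtain ⟨b1, b2⟩ := hv_int T α C hα K K' hK hA hFTC s b hs hsT hbT
  have h0 : (fun r => K' r s * (f r - f s)) =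
      fun r => K' r s * (hv a r - hv a s) - K' r s * (hv b r - hv b s) := by
    funext r
    rw [hf, ind_eq_hv a b r hab, ind_eq_hv a b s hab]
    ring
  constructor
  · rw [h0]; exact a1.sub b1
  · rw [h0, intervalIntegral.integral_sub a1 b1, a2, b2, hf, ind_eq_hv a b s hab]
    ring

lemma kstarT_tensor (T s : ℝ) (K K' : ℝ → ℝ → ℝ) (n m : ℕ) (c : ℕ → ℕ → ℝ) (f g : ℕ → ℝ → ℝ)
    (k l : ℕ → ℝ) (ψ : ℝ → ℝ → ℝ)
    (hψ : ∀ u v, ψ u v = ∑ i ∈ Finset.range n, ∑ j ∈ Finset.range m, c i j * (f i u * g j v))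
    (hf : ∀ i ∈ Finset.range n, IntervalIntegrable (fun r => K' r s * (f i r - f i s)) volume s T ∧
      K T s * f i s + ∫ r in s..T, K' r s * (f i r - f i s) = k i)
    (hg : ∀ i ∈ Finset.range m, IntervalIntegrable (fun r => K' r s * (g i r - g i s)) volume s T ∧
      K T s * g i s + ∫ r in s..T, K' r s * (g i r - g i s) = l i) :
    KstarT T K K' ψ s s =
      ∑ i ∈ Finset.range n, ∑ j ∈ Finset.range m, c i j * (k i * l j) := by
  set F : ℕ → ℝ := fun i => ∫ r in s..T, K' r s * (f i r - f i s) with hF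
  set G : ℕ → ℝ := fun i => ∫ r in s..T, K' r s * (g i r - g i s) with hG
  have e1 : AK T K' (fun x => ψ x s) s =
      ∑ i ∈ Finset.range n, ∑ j ∈ Finset.range m, c i j * g j s * F i := by
    unfold AK
    have : (fun r => K' r s • (ψ r s - ψ s s)) = fun r => ∑ i ∈ Finset.range n,
        ∑ j ∈ Finset.range m, c i j * g j s * (K' r s * (f i r - f i s)) := by
      funext r
      rw [hψ, hψ, smul_eq_mul, ← Finset.sum_sub_distrib, Finset.mul_sum]
      refine Finset.sum_congr rfl fun i _ => ?_
      rw [← Finset.sum_sub_distrib, Finset.mul_sum]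
      refine Finset.sum_congr rfl fun j _ => ?_
      ring
    rw [this, intervalIntegral.integral_finsetSum]
    · refine Finset.sum_congr rfl fun i hi => ?_
      rw [intervalIntegral.integral_finsetSum]
      · refine Finset.sum_congr rfl fun j _ => ?_
        rw [intervalIntegral.integral_const_mul]
      · exact fun j _ => (hf i hi).1.const_mul _
    · exact fun i hi => ii_sum fun j _ => (hf i hi).1.const_mul _
  have e2 : AK T K' (fun y => ψ s y) s =
      ∑ i ∈ Finset.range n, ∑ j ∈ Finset.range m, c i j * f i s * G j := by
    unfold AK
    have : (fun r => K' r s • (ψ s r - ψ s s)) = fun r => ∑ i ∈ Finset.range n,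
        ∑ j ∈ Finset.range m, c i j * f i s * (K' r s * (g j r - g j s)) := by
      funext r
      rw [hψ, hψ, smul_eq_mul, ← Finset.sum_sub_distrib, Finset.mul_sum]
      refine Finset.sum_congr rfl fun i _ => ?_
      rw [← Finset.sum_sub_distrib, Finset.mul_sum]
      refine Finset.sum_congr rfl fun j _ => ?_
      ring
    rw [this, intervalIntegral.integral_finsetSum]
    · refine Finset.sum_congr rfl fun i hi => ?_
      rw [intervalIntegral.integral_finsetSum]
      · refine Finset.sum_congr rfl fun j _ => ?_
        rw [intervalIntegral.integral_const_mul]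
      · exact fun j hj => (hg j hj).1.const_mul _
    · exact fun i hi => ii_sum fun j hj => (hg j hj).1.const_mul _
  have e3 : BK T K' ψ s s =
      ∑ i ∈ Finset.range n, ∑ j ∈ Finset.range m, c i j * F i * G j := by
    unfold BK
    have h1 : ∀ r₂, (∫ r₁ in s..T, (K' r₁ s * K' r₂ s) • rectInc ψ s r₁ s r₂) =
        ∑ i ∈ Finset.range n, ∑ j ∈ Finset.range m,
          c i j * F i * (K' r₂ s * (g j r₂ - g j s)) := by
      intro r₂
      have : (fun r₁ => (K' r₁ s * K' r₂ s) • rectInc ψ s r₁ s r₂) = fun r₁ =>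
          ∑ i ∈ Finset.range n, ∑ j ∈ Finset.range m,
            c i j * (K' r₂ s * (g j r₂ - g j s)) * (K' r₁ s * (f i r₁ - f i s)) := by
        funext r
        unfold rectInc
        rw [hψ, hψ, hψ, hψ, smul_eq_mul, ← Finset.sum_add_distrib, ← Finset.sum_sub_distrib,
          ← Finset.sum_sub_distrib, Finset.mul_sum]
        refine Finset.sum_congr rfl fun i _ => ?_
        rw [← Finset.sum_add_distrib, ← Finset.sum_sub_distrib,
          ← Finset.sum_sub_distrib, Finset.mul_sum]
        refine Finset.sum_congr rfl fun j _ => ?_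
        ring
      rw [this, intervalIntegral.integral_finsetSum]
      · refine Finset.sum_congr rfl fun i hi => ?_
        rw [intervalIntegral.integral_finsetSum]
        · refine Finset.sum_congr rfl fun j _ => ?_
          rw [intervalIntegral.integral_const_mul]
          simp only [hF]
          ring
        · exact fun j _ => (hf i hi).1.const_mul _
      · exact fun i hi => ii_sum fun j _ => (hf i hi).1.const_mul _
    simp only [h1]
    rw [intervalIntegral.integral_finsetSum]
    · refine Finset.sum_congr rfl fun i hi => ?_
      rw [intervalIntegral.integral_finsetSum]
      · refine Finset.sum_congr rfl fun j _ => ?_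
        rw [intervalIntegral.integral_const_mul]
      · exact fun j hj => (hg j hj).1.const_mul _
    · exact fun i hi => ii_sum fun j hj => (hg j hj).1.const_mul _
  unfold KstarT
  rw [e1, e2, e3, hψ]
  simp only [smul_eq_mul, Finset.mul_sum]
  rw [← Finset.sum_add_distrib, ← Finset.sum_add_distrib, ← Finset.sum_add_distrib]
  refine Finset.sum_congr rfl fun i hi => ?_
  rw [← Finset.sum_add_distrib, ← Finset.sum_add_distrib, ← Finset.sum_add_distrib]
  refine Finset.sum_congr rfl fun j hj => ?_
  rw [← (hf i hi).2, ← (hg j hj).2]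
  simp only [hF, hG]
  ring

lemma K_meas (K : ℝ → ℝ → ℝ) (hK : IsVolterraKernel K) (t : ℝ) : Measurable (K t) :=
  hK.1.comp measurable_prodMk_left

lemma K_memLp (T α C : ℝ) (hα' : α < 1 / 4) (K K' : ℝ → ℝ → ℝ) (hK : IsVolterraKernel K)
    (hA : CondA T α C K K') (t : ℝ) (ht0 : 0 ≤ t) (htT : t ≤ T) :
    MemLp (K t) 2 (volume.restrict (Ioc 0 T)) := by
  have hm := K_meas K hK t
  rw [memLp_two_iff_integrable_sq hm.aestronglyMeasurable]
  have i1 : IntegrableOn (fun r : ℝ => r ^ (-(4 * α))) (Ioc 0 t) := by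
    rw [← intervalIntegrable_iff_integrableOn_Ioc_of_le ht0]
    exact intervalIntegral.intervalIntegrable_rpow' (by linarith)
  have i2 : IntegrableOn (fun r : ℝ => (t - r) ^ (-(4 * α))) (Ioc 0 t) := by
    rw [← intervalIntegrable_iff_integrableOn_Ioc_of_le ht0]
    have := (intervalIntegral.intervalIntegrable_rpow' (a := 0) (b := t) (r := -(4 * α))
      (by linarith)).comp_sub_left t
    simpa using this.symm
  have i3 : IntegrableOn (fun r => K t r ^ 2) (Ioc 0 t) := by
    refine Integrable.mono' (g := fun r => C ^ 2 * (r ^ (-(4 * α)) + (t - r) ^ (-(4 * α))))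
      ((i1.add i2).const_mul _) (hm.pow_const 2).aestronglyMeasurable ?_
    filter_upwards [ae_restrict_mem measurableSet_Ioc] with r hr
    rw [Real.norm_of_nonneg (sq_nonneg _)]
    have p1 : 0 ≤ r ^ (-(4 * α)) := Real.rpow_nonneg hr.1.le _
    have p2 : 0 ≤ (t - r) ^ (-(4 * α)) := Real.rpow_nonneg (by linarith [hr.2]) _
    rcases eq_or_lt_of_le hr.2 with h | h
    · rw [hK.2 t r h.ge]
      have := mul_nonneg (sq_nonneg C) (add_nonneg p1 p2)
      simpa using this
    · have hb := hA.1 r t hr.1 h htT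
      have ex : ∀ x : ℝ, 0 < x → x ^ (-(4 * α)) = (x ^ (-α)) ^ 4 := by
        intro x hx
        rw [← Real.rpow_natCast, ← Real.rpow_mul hx.le]
        congr 1
        push_cast
        ring
      rw [ex r hr.1, ex (t - r) (sub_pos.mpr h)]
      set x := r ^ (-α)
      set y := (t - r) ^ (-α)
      have : K t r ^ 2 ≤ (C * x * y) ^ 2 := by
        rw [← sq_abs]
        exact pow_le_pow_left₀ (abs_nonneg _) hb 2
      refine this.trans ?_
      have h5 : x ^ 2 * y ^ 2 ≤ x ^ 4 + y ^ 4 := by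
        nlinarith [sq_nonneg (x ^ 2 - y ^ 2), sq_nonneg (x ^ 2), sq_nonneg (y ^ 2)]
      calc (C * x * y) ^ 2 = C ^ 2 * (x ^ 2 * y ^ 2) := by ring
        _ ≤ _ := mul_le_mul_of_nonneg_left h5 (sq_nonneg C)
  have hz : IntegrableOn (fun r => K t r ^ 2) (Ioc t T) := by
    refine (integrableOn_zero : IntegrableOn (fun _ : ℝ => (0:ℝ)) (Ioc t T) volume).congr_fun
      (fun r hr => ?_) measurableSet_Ioc
    simp [hK.2 t r hr.1.le]
  have := i3.union hz
  rwa [Ioc_union_Ioc_eq_Ioc ht0 htT] at this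

lemma KK_int (T α C : ℝ) (hα' : α < 1 / 4) (K K' : ℝ → ℝ → ℝ) (hK : IsVolterraKernel K)
    (hA : CondA T α C K K') (s t : ℝ) (hs0 : 0 ≤ s) (hsT : s ≤ T) (ht0 : 0 ≤ t) (htT : t ≤ T) :
    IntervalIntegrable (fun r => K t r * K s r) volume 0 T := by
  rw [intervalIntegrable_iff_integrableOn_Ioc_of_le (hs0.trans hsT)]
  exact (K_memLp T α C hα' K K' hK hA t ht0 htT).integrable_mul
    (K_memLp T α C hα' K K' hK hA s hs0 hsT)

lemma covR_eq (T α C : ℝ) (hα' : α < 1 / 4) (K K' : ℝ → ℝ → ℝ) (hK : IsVolterraKernel K)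
    (hA : CondA T α C K K') (s t : ℝ) (hs0 : 0 ≤ s) (hsT : s ≤ T) (ht0 : 0 ≤ t) (htT : t ≤ T) :
    covR K s t = ∫ r in (0:ℝ)..T, K t r * K s r := by
  have hi := KK_int T α C hα' K K' hK hA s t hs0 hsT ht0 htT
  have hm0 : 0 ≤ min s t := le_min hs0 ht0
  have hmT : min s t ≤ T := (min_le_left _ _).trans hsT
  have hsplit := intervalIntegral.integral_add_adjacent_intervals
    (hi.mono_set (c := 0) (d := min s t) (by
      rw [uIcc_of_le hm0, uIcc_of_le (hm0.trans hmT)]; exact Icc_subset_Icc_right hmT))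
    (hi.mono_set (c := min s t) (d := T) (by
      rw [uIcc_of_le hmT, uIcc_of_le (hm0.trans hmT)]; exact Icc_subset_Icc_left hm0))
  have hz : ∫ r in (min s t)..T, K t r * K s r = 0 := by
    rw [intervalIntegral.integral_congr (g := fun _ => 0)]
    · simp
    · intro r hr
      rw [uIcc_of_le hmT] at hr
      rcases min_le_iff.mp hr.1 with h | h
      · simp [hK.2 s r h]
      · simp [hK.2 t r h]
  unfold covR
  rw [← hsplit, hz, add_zero]

lemma Partition.bounds {T : ℝ} (P : Partition T) (i : ℕ) (hi : i ≤ P.n) :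
    0 ≤ P.pts i ∧ P.pts i ≤ T := by
  constructor
  · induction i with
    | zero => exact P.first.ge
    | succ k ih => exact (ih (by omega)).trans (P.lt k (by omega)).le
  · obtain ⟨d, hd⟩ := Nat.exists_eq_add_of_le hi
    induction d generalizing i with
    | zero => exact (by rw [hd]; simp : P.pts i = P.pts P.n).le.trans P.last.le
    | succ d ih => exact (P.lt i (by omega)).le.trans (ih (i + 1) (by omega) (by omega))

/-- identity (4.4): for a bounded `φ` and any grid partition, the
Riemann–Stieltjes sum against `R` equals `∫_0^T (𝒦*⊗𝒦*)φ^π(r,r) dr`. -/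
theorem RSsum_eq_integral_kstarT_step2 (T α : ℝ) (hT : 0 < T) (hα : 0 ≤ α) (hα' : α < 1 / 4)
    (K K' : ℝ → ℝ → ℝ) (hK : IsVolterraKernel K) (hA : ∃ C : ℝ, CondA T α C K K')
    (hFTC : ∀ s a : ℝ, 0 < s → s < a → a ≤ T → K T s - K a s = ∫ r in a..T, K' r s)
    (φ : ℝ → ℝ → ℝ) (hφ : ∃ M : ℝ, ∀ u v : ℝ, |φ u v| ≤ M)
    (P Q : Partition T) :
    RSsum P Q φ (covR K) = ∫ r in (0:ℝ)..T, KstarT T K K' (step2 P Q φ) r r := by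
  obtain ⟨C, hA⟩ := hA
  set f : ℕ → ℝ → ℝ := fun i => (Set.Ico (P.pts i) (P.pts (i + 1))).indicator (fun _ => (1:ℝ))
    with hf
  set g : ℕ → ℝ → ℝ := fun i => (Set.Ico (Q.pts i) (Q.pts (i + 1))).indicator (fun _ => (1:ℝ))
    with hg
  have hψ : ∀ u v, step2 P Q φ u v = ∑ i ∈ Finset.range P.n, ∑ j ∈ Finset.range Q.n,
      φ (P.pts i) (Q.pts j) * (f i u * g j v) := by
    intro u v
    unfold step2
    refine Finset.sum_congr rfl fun i _ => Finset.sum_congr rfl fun j _ => ?_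
    by_cases h1 : u ∈ Set.Ico (P.pts i) (P.pts (i + 1)) <;>
    by_cases h2 : v ∈ Set.Ico (Q.pts j) (Q.pts (j + 1)) <;>
    simp only [hf, hg, Set.indicator, Set.mem_prod, h1, h2] <;> simp
  have hkey : ∀ s, 0 < s → s < T → KstarT T K K' (step2 P Q φ) s s =
      ∑ i ∈ Finset.range P.n, ∑ j ∈ Finset.range Q.n, φ (P.pts i) (Q.pts j) *
        ((K (P.pts (i + 1)) s - K (P.pts i) s) * (K (Q.pts (j + 1)) s - K (Q.pts j) s)) := by
    intro s hs hsT
    refine kstarT_tensor T s K K' P.n Q.n (fun i j => φ (P.pts i) (Q.pts j)) f g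
      (fun i => K (P.pts (i + 1)) s - K (P.pts i) s)
      (fun j => K (Q.pts (j + 1)) s - K (Q.pts j) s) _ hψ ?_ ?_
    · intro i hi
      have hi' := Finset.mem_range.mp hi
      exact ind_int T α C hα K K' hK hA hFTC s _ _ hs hsT (P.lt i hi').le
        (P.bounds (i + 1) hi').2 _ rfl
    · intro i hi
      have hi' := Finset.mem_range.mp hi
      exact ind_int T α C hα K K' hK hA hFTC s _ _ hs hsT (Q.lt i hi').le
        (Q.bounds (i + 1) hi').2 _ rfl
  have hRHS : ∫ r in (0:ℝ)..T, KstarT T K K' (step2 P Q φ) r r =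
      ∫ r in (0:ℝ)..T, ∑ i ∈ Finset.range P.n, ∑ j ∈ Finset.range Q.n, φ (P.pts i) (Q.pts j) *
        ((K (P.pts (i + 1)) r - K (P.pts i) r) * (K (Q.pts (j + 1)) r - K (Q.pts j) r)) := by
    rw [intervalIntegral.integral_of_le hT.le, intervalIntegral.integral_of_le hT.le,
      integral_Ioc_eq_integral_Ioo, integral_Ioc_eq_integral_Ioo]
    exact setIntegral_congr_fun measurableSet_Ioo fun r hr => hkey r hr.1 hr.2
  have hcell : ∀ i ∈ Finset.range P.n, ∀ j ∈ Finset.range Q.n,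
      IntervalIntegrable (fun r => (K (P.pts (i + 1)) r - K (P.pts i) r) *
        (K (Q.pts (j + 1)) r - K (Q.pts j) r)) volume 0 T ∧
      ∫ r in (0:ℝ)..T, (K (P.pts (i + 1)) r - K (P.pts i) r) *
        (K (Q.pts (j + 1)) r - K (Q.pts j) r) =
      rectInc (covR K) (P.pts i) (P.pts (i + 1)) (Q.pts j) (Q.pts (j + 1)) := by
    intro i hi j hj
    have hi' := Finset.mem_range.mp hi
    have hj' := Finset.mem_range.mp hj
    obtain ⟨a0, a1⟩ := P.bounds i hi'.le
    obtain ⟨b0, b1⟩ := P.bounds (i + 1) hi'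
    obtain ⟨c0, c1⟩ := Q.bounds j hj'.le
    obtain ⟨d0, d1⟩ := Q.bounds (j + 1) hj'
    have I1 := KK_int T α C hα' K K' hK hA _ _ a0 a1 c0 c1
    have I2 := KK_int T α C hα' K K' hK hA _ _ b0 b1 d0 d1
    have I3 := KK_int T α C hα' K K' hK hA _ _ a0 a1 d0 d1
    have I4 := KK_int T α C hα' K K' hK hA _ _ b0 b1 c0 c1
    have he : (fun r => (K (P.pts (i + 1)) r - K (P.pts i) r) *
        (K (Q.pts (j + 1)) r - K (Q.pts j) r)) = fun r =>
        K (Q.pts j) r * K (P.pts i) r + K (Q.pts (j + 1)) r * K (P.pts (i + 1)) r -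
        K (Q.pts (j + 1)) r * K (P.pts i) r - K (Q.pts j) r * K (P.pts (i + 1)) r := by
      funext r
      ring
    rw [he]
    refine ⟨((I1.add I2).sub I3).sub I4, ?_⟩
    unfold rectInc
    rw [covR_eq T α C hα' K K' hK hA _ _ a0 a1 c0 c1, covR_eq T α C hα' K K' hK hA _ _ b0 b1 d0 d1,
      covR_eq T α C hα' K K' hK hA _ _ a0 a1 d0 d1, covR_eq T α C hα' K K' hK hA _ _ b0 b1 c0 c1,
      intervalIntegral.integral_sub ((I1.add I2).sub I3) I4,
      intervalIntegral.integral_sub (I1.add I2) I3, intervalIntegral.integral_add I1 I2]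
  rw [hRHS, intervalIntegral.integral_finsetSum]
  · unfold RSsum
    refine Finset.sum_congr rfl fun i hi => ?_
    rw [intervalIntegral.integral_finsetSum]
    · refine Finset.sum_congr rfl fun j hj => ?_
      rw [intervalIntegral.integral_const_mul, (hcell i hi j hj).2]
    · exact fun j hj => (hcell i hi j hj).1.const_mul _
  · exact fun i hi => ii_sum fun j hj => (hcell i hi j hj).1.const_mul _

end YS
end
end

section
/- Let T > 0, α ≥ 0, 0 < λ ≤ 1, and ε > 0 with λ − α − ε > 0. Let π = {s_i} be a partition of [0,T] with mesh ‖π‖ := max_i (s_{i+1} − s_i). Then for every index i and every s ∈ [s_i, s_{i+1}), Σ_{k ≥ i+1} ∫_{s_k}^{s_{k+1}} (r − s_k)^λ (r − s)^(−α−1) dr ≤ (T − s)^ε · ε^(−1) · ‖π‖^(λ−α−ε). -/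
open MeasureTheory Set

noncomputable section

namespace YS

variable {E : Type*} [NormedAddCommGroup E] [NormedSpace ℝ E]

/-- estimate (2.7): the tail-sum estimate
`Σ_{k ≥ i+1} ∫_{s_k}^{s_{k+1}} (r−s_k)^λ (r−s)^{−α−1} dr ≤ (T−s)^ε ε⁻¹ ‖π‖^{λ−α−ε}`. -/
theorem tail_sum_estimate (T α lam ε : ℝ) (hT : 0 < T) (hα : 0 ≤ α)
    (hlam : 0 < lam) (hlam' : lam ≤ 1) (hε : 0 < ε) (hlamαε : 0 < lam - α - ε)
    (P : Partition T) :
    ∀ i < P.n, ∀ s ∈ Ico (P.pts i) (P.pts (i + 1)),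
      (∑ k ∈ Finset.Ico (i + 1) P.n,
          ∫ r in (P.pts k)..(P.pts (k + 1)), (r - P.pts k) ^ lam * (r - s) ^ (-α - 1)) ≤
        (T - s) ^ ε * ε⁻¹ * P.mesh ^ (lam - α - ε) := by
  intro i hi s hs
  have hmono : ∀ k, i + 1 ≤ k → k ≤ P.n → s < P.pts k := by
    intro k hk
    induction k, hk using Nat.le_induction with
    | base => intro _; exact hs.2
    | succ m hm ih => intro h; exact (ih (by omega)).trans (P.lt m (by omega))
  have key : ∀ k ∈ Finset.Ico (i + 1) P.n,
      (∫ r in (P.pts k)..(P.pts (k + 1)), (r - P.pts k) ^ lam * (r - s) ^ (-α - 1)) ≤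
      P.mesh ^ (lam - α - ε) * ε⁻¹ * ((P.pts (k + 1) - s) ^ ε - (P.pts k - s) ^ ε) := by
    intro k hk
    rw [Finset.mem_Ico] at hk
    have hsk := hmono k hk.1 hk.2.le
    have hlt := P.lt k hk.2
    have hmesh : P.pts (k + 1) - P.pts k ≤ P.mesh :=
      Finset.le_sup' (fun i => P.pts (i + 1) - P.pts i) (Finset.mem_range.mpr hk.2)
    have hne : ∀ r ∈ uIcc (P.pts k) (P.pts (k + 1)), r - s ≠ 0 := by
      intro r hr
      rw [uIcc_of_le hlt.le] at hr
      have := hr.1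
      exact (by linarith : 0 < r - s).ne'
    have hc : ∀ p : ℝ, ContinuousOn (fun r : ℝ => (r - s) ^ p)
        (uIcc (P.pts k) (P.pts (k + 1))) := fun p =>
      (continuousOn_id.sub continuousOn_const).rpow_const (fun r hr => Or.inl (hne r hr))
    have hint : (∫ r in (P.pts k)..(P.pts (k + 1)), (r - s) ^ (ε - 1)) =
        ε⁻¹ * ((P.pts (k + 1) - s) ^ ε - (P.pts k - s) ^ ε) := by
      rw [intervalIntegral.integral_comp_sub_right (fun r => r ^ (ε - 1)) s,
        integral_rpow (Or.inl (by linarith))]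
      rw [sub_add_cancel]
      field_simp
    rw [mul_assoc, ← hint, ← intervalIntegral.integral_const_mul]
    apply intervalIntegral.integral_mono_on hlt.le
    · apply ContinuousOn.intervalIntegrable
      refine ContinuousOn.mul ?_ (hc _)
      exact (continuousOn_id.sub continuousOn_const).rpow_const (fun r _ => Or.inr hlam.le)
    · exact (continuousOn_const.mul (hc _)).intervalIntegrable
    · intro r hr
      have h0 : 0 ≤ r - P.pts k := by linarith [hr.1]
      have hrs : 0 < r - s := by linarith [hr.1]
      have h1 : (r - P.pts k) ^ lam =
          (r - P.pts k) ^ (lam - α - ε) * (r - P.pts k) ^ (α + ε) := by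
        rw [← Real.rpow_add_of_nonneg h0 hlamαε.le (by linarith)]
        congr 1; ring
      have h2 : (r - s) ^ (ε - 1) = (r - s) ^ (α + ε) * (r - s) ^ (-α - 1) := by
        rw [← Real.rpow_add hrs]
        congr 1; ring
      have h3 : (r - P.pts k) ^ (lam - α - ε) ≤ P.mesh ^ (lam - α - ε) :=
        Real.rpow_le_rpow h0 (by linarith [hr.2]) hlamαε.le
      have h4 : (r - P.pts k) ^ (α + ε) ≤ (r - s) ^ (α + ε) :=
        Real.rpow_le_rpow h0 (by linarith) (by linarith)
      have h5 : 0 ≤ (r - s) ^ (-α - 1) := Real.rpow_nonneg hrs.le _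
      have h6 : 0 ≤ (r - P.pts k) ^ (α + ε) := Real.rpow_nonneg h0 _
      have h7 := h6.trans h4
      have h8 := (Real.rpow_nonneg h0 (lam - α - ε)).trans h3
      rw [h1, h2, ← mul_assoc]
      exact mul_le_mul_of_nonneg_right (mul_le_mul h3 h4 h6 h8) h5
  refine (Finset.sum_le_sum key).trans ?_
  rw [← Finset.mul_sum, Finset.sum_Ico_sub (fun k => (P.pts k - s) ^ ε) (by omega), P.last]
  have hm0 : 0 ≤ P.mesh :=
    (sub_nonneg.mpr (P.lt i hi).le).trans
      (Finset.le_sup' (fun i => P.pts (i + 1) - P.pts i) (Finset.mem_range.mpr hi))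
  have h1 : 0 ≤ P.mesh ^ (lam - α - ε) * ε⁻¹ :=
    mul_nonneg (Real.rpow_nonneg hm0 _) (inv_nonneg.mpr hε.le)
  have h2 : 0 ≤ (P.pts (i + 1) - s) ^ ε := Real.rpow_nonneg (by linarith [hs.2]) _
  nlinarith [mul_nonneg h1 h2]

end YS
end
end

section
/- Let T > 0, α ∈ [0, 1/4), and λ ∈ (α, 1]. There is a constant C, depending only on λ, α and T, such that for every partition π = {s_i} of [0,T], ∫_0^T [ Σ_i 1_{[s_i, s_{i+1})}(s) (s − s_i)^λ (s_{i+1} − s)^(−α) s^(−α) ]² ds ≤ C ‖π‖^{2(λ−α)}, where ‖π‖ := max_i (s_{i+1} − s_i). In particular this integral tends to 0 as the mesh of the partition tends to 0. -/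
open MeasureTheory Set

noncomputable section

namespace YS

variable {E : Type*} [NormedAddCommGroup E] [NormedSpace ℝ E]

theorem Partition.pts_le {T : ℝ} (P : Partition T) {i j : ℕ} (hij : i ≤ j) (hj : j ≤ P.n) :
    P.pts i ≤ P.pts j := by
  induction j, hij using Nat.le_induction with
  | base => exact le_rfl
  | succ k hk ih => exact (ih (by omega)).trans (P.lt k (by omega)).le

theorem Partition.le_mesh {T : ℝ} (P : Partition T) {i : ℕ} (hi : i < P.n) :
    P.pts (i + 1) - P.pts i ≤ P.mesh :=
  Finset.le_sup' (fun i => P.pts (i + 1) - P.pts i) (Finset.mem_range.mpr hi)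

theorem Partition.idx_unique {T : ℝ} (P : Partition T) {i j : ℕ} (hi : i < P.n) (hj : j < P.n)
    {s : ℝ} (h1 : s ∈ Ico (P.pts i) (P.pts (i + 1))) (h2 : s ∈ Ico (P.pts j) (P.pts (j + 1))) :
    i = j := by
  rcases lt_trichotomy i j with h | h | h
  · exact absurd (P.pts_le (i := i + 1) (j := j) h hj.le) (not_le.mpr (h2.1.trans_lt h1.2))
  · exact h
  · exact absurd (P.pts_le (i := j + 1) (j := i) h hi.le) (not_le.mpr (h1.1.trans_lt h2.2))

theorem term_bound {α lam a b s m : ℝ} (hα : 0 ≤ α) (hl : α < lam)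
    (h0 : 0 < s) (ha : a ≤ s) (hb : s < b) (hm : b - a ≤ m) :
    ((s - a) ^ lam * (b - s) ^ (-α) * s ^ (-α)) ^ 2 ≤
      m ^ (2 * (lam - α)) * (((b - a) ^ (4 * α) * (b - s) ^ (-(4 * α)) + s ^ (-(4 * α))) / 2) := by
  have hbs : 0 < b - s := by linarith
  have hh : 0 < b - a := by linarith
  have e4 : ∀ x : ℝ, 0 < x → x ^ (-(4 * α)) = (x ^ (-α)) ^ 4 := by
    intro x hx
    rw [← Real.rpow_natCast, ← Real.rpow_mul hx.le]
    congr 1; push_cast; ring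
  have e4' : (b - a) ^ (4 * α) = ((b - a) ^ α) ^ 4 := by
    rw [← Real.rpow_natCast, ← Real.rpow_mul hh.le]
    congr 1; push_cast; ring
  rw [e4 _ hbs, e4 _ h0, e4']
  have hp : (s - a) ^ lam ≤ (b - a) ^ (lam - α) * (b - a) ^ α := by
    rw [← Real.rpow_add hh]
    have : lam - α + α = lam := by ring
    rw [this]
    exact Real.rpow_le_rpow (by linarith) (by linarith) (by linarith)
  have hm2 : (b - a) ^ (lam - α) ≤ m ^ (lam - α) :=
    Real.rpow_le_rpow hh.le hm (by linarith)
  have e2 : m ^ (2 * (lam - α)) = (m ^ (lam - α)) ^ 2 := by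
    rw [← Real.rpow_natCast, ← Real.rpow_mul (by linarith)]
    congr 1; push_cast; ring
  rw [e2]
  have n1 : 0 ≤ (s - a) ^ lam := Real.rpow_nonneg (by linarith) _
  have n2 : 0 < (b - s) ^ (-α) := Real.rpow_pos_of_pos hbs _
  have n3 : 0 < s ^ (-α) := Real.rpow_pos_of_pos h0 _
  have n4 : 0 < (b - a) ^ α := Real.rpow_pos_of_pos hh _
  have hq : (s - a) ^ lam ≤ m ^ (lam - α) * (b - a) ^ α :=
    hp.trans (mul_le_mul_of_nonneg_right hm2 n4.le)
  generalize (s - a) ^ lam = p at *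
  generalize (b - s) ^ (-α) = x at *
  generalize s ^ (-α) = y at *
  generalize (b - a) ^ α = z at *
  generalize m ^ (lam - α) = w at *
  calc (p * x * y) ^ 2 ≤ (w * z * x * y) ^ 2 := by gcongr
    _ = w ^ 2 * ((z * x) ^ 2 * y ^ 2) := by ring
    _ ≤ w ^ 2 * ((z ^ 4 * x ^ 4 + y ^ 4) / 2) := by
      gcongr
      nlinarith [sq_nonneg ((z * x) ^ 2 - y ^ 2)]

/-- estimate (2.9): there is a constant `C = C(λ, α, T)` such that for
every partition `π` of `[0,T]`,
`∫_0^T [Σ_i 1_{[s_i,s_{i+1})}(s) (s−s_i)^λ (s_{i+1}−s)^{−α} s^{−α}]² ds ≤ C ‖π‖^{2(λ−α)}`. -/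
theorem xi_one_L2_estimate (T α lam : ℝ) (hT : 0 < T) (hα : 0 ≤ α) (hα' : α < 1 / 4)
    (hαlam : α < lam) (hlam' : lam ≤ 1) :
    ∃ C : ℝ, ∀ P : Partition T,
      (∫ s in (0:ℝ)..T,
          (∑ i ∈ Finset.range P.n,
            (Ico (P.pts i) (P.pts (i + 1))).indicator
              (fun s' => (s' - P.pts i) ^ lam * (P.pts (i + 1) - s') ^ (-α) * s' ^ (-α))
              s) ^ 2) ≤
        C * P.mesh ^ (2 * (lam - α)) := by
  have h4 : -1 < -(4 * α) := by linarith
  refine ⟨(T / (1 - 4 * α) + T ^ (1 - 4 * α) / (1 - 4 * α)) / 2, fun P => ?_⟩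
  set g : ℕ → ℝ → ℝ := fun i s' =>
    (P.pts (i + 1) - P.pts i) ^ (4 * α) * (P.pts (i + 1) - s') ^ (-(4 * α)) with hg
  set G : ℝ → ℝ := fun s => P.mesh ^ (2 * (lam - α)) *
    ((∑ i ∈ Finset.range P.n, (Ico (P.pts i) (P.pts (i + 1))).indicator (g i) s
      + s ^ (-(4 * α))) / 2) with hG
  have hm0 : 0 ≤ P.mesh := le_trans (sub_pos.mpr (P.lt 0 P.n_pos)).le (P.le_mesh P.n_pos)
  have hgi : ∀ i, IntervalIntegrable (g i) volume (P.pts i) (P.pts (i + 1)) := by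
    intro i
    refine IntervalIntegrable.const_mul ?_ _
    have := (intervalIntegral.intervalIntegrable_rpow' (a := P.pts (i + 1) - P.pts i)
      (b := P.pts (i + 1) - P.pts (i + 1)) h4).comp_sub_left (P.pts (i + 1))
    simpa using this
  have hgint : ∀ i < P.n, Integrable ((Ico (P.pts i) (P.pts (i + 1))).indicator (g i)) := by
    intro i hi
    rw [integrable_indicator_iff measurableSet_Ico]
    exact (intervalIntegrable_iff_integrableOn_Ico_of_le (P.lt i hi).le).mp (hgi i)
  have hgval : ∀ i < P.n, ∫ s, (Ico (P.pts i) (P.pts (i + 1))).indicator (g i) s =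
      (P.pts (i + 1) - P.pts i) / (1 - 4 * α) := by
    intro i hi
    have hh : 0 < P.pts (i + 1) - P.pts i := sub_pos.mpr (P.lt i hi)
    rw [integral_indicator measurableSet_Ico, integral_Ico_eq_integral_Ioc,
      ← intervalIntegral.integral_of_le (P.lt i hi).le]
    simp only [hg]
    rw [intervalIntegral.integral_const_mul,
      intervalIntegral.integral_comp_sub_left (fun x => x ^ (-(4 * α))) (P.pts (i + 1)),
      integral_rpow (Or.inl h4), sub_self, Real.zero_rpow (by linarith), sub_zero,
      mul_div_assoc', ← Real.rpow_add hh]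
    congr 1
    · have : 4 * α + (-(4 * α) + 1) = 1 := by ring
      rw [this, Real.rpow_one]
    · ring
  have hgnn : ∀ i s, 0 ≤ (Ico (P.pts i) (P.pts (i + 1))).indicator (g i) s := by
    intro i s
    refine indicator_nonneg (fun x hx => ?_) s
    exact mul_nonneg (Real.rpow_nonneg (by linarith [hx.1, hx.2]) _)
      (Real.rpow_nonneg (by linarith [hx.2]) _)
  have hsumI : IntervalIntegrable (fun s => ∑ i ∈ Finset.range P.n,
      (Ico (P.pts i) (P.pts (i + 1))).indicator (g i) s) volume 0 T := by
    refine Integrable.intervalIntegrable ?_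
    exact integrable_finsetSum _ fun i hi => hgint i (Finset.mem_range.mp hi)
  have hpI : IntervalIntegrable (fun s : ℝ => s ^ (-(4 * α))) volume 0 T :=
    intervalIntegral.intervalIntegrable_rpow' h4
  have hGI : IntervalIntegrable G volume 0 T :=
    ((hsumI.add hpI).div_const 2).const_mul _
  have step1 : (∫ s in (0:ℝ)..T,
          (∑ i ∈ Finset.range P.n,
            (Ico (P.pts i) (P.pts (i + 1))).indicator
              (fun s' => (s' - P.pts i) ^ lam * (P.pts (i + 1) - s') ^ (-α) * s' ^ (-α))
              s) ^ 2) ≤ ∫ s in (0:ℝ)..T, G s := by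
    rw [intervalIntegral.integral_of_le hT.le, intervalIntegral.integral_of_le hT.le]
    refine integral_mono_of_nonneg (Filter.Eventually.of_forall fun s => sq_nonneg _) hGI.1 ?_
    refine (ae_restrict_iff' measurableSet_Ioc).mpr (Filter.Eventually.of_forall fun s hs => ?_)
    have hs0 : 0 < s := hs.1
    by_cases hex : ∃ i < P.n, s ∈ Ico (P.pts i) (P.pts (i + 1))
    · obtain ⟨i, hi, hsi⟩ := hex
      have hsing : (g i s) ≤ ∑ j ∈ Finset.range P.n,
          (Ico (P.pts j) (P.pts (j + 1))).indicator (g j) s := by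
        have := Finset.single_le_sum (f := fun j =>
          (Ico (P.pts j) (P.pts (j + 1))).indicator (g j) s)
          (fun j _ => hgnn j s) (Finset.mem_range.mpr hi)
        simpa only [indicator_of_mem hsi] using this
      beta_reduce
      rw [Finset.sum_eq_single i
        (fun j hj hji => indicator_of_notMem
          (fun hsj => hji (P.idx_unique (Finset.mem_range.mp hj) hi hsj hsi)) _)
        (fun h => absurd (Finset.mem_range.mpr hi) h), indicator_of_mem hsi]
      refine (term_bound hα hαlam hs0 hsi.1 hsi.2 (P.le_mesh hi)).trans ?_
      refine mul_le_mul_of_nonneg_left ?_ (Real.rpow_nonneg hm0 _)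
      have : g i s = (P.pts (i + 1) - P.pts i) ^ (4 * α) *
        (P.pts (i + 1) - s) ^ (-(4 * α)) := rfl
      linarith
    · beta_reduce
      rw [Finset.sum_eq_zero fun j hj => indicator_of_notMem
          (fun hsj => hex ⟨j, Finset.mem_range.mp hj, hsj⟩) _]
      have h1 : 0 ≤ ∑ j ∈ Finset.range P.n,
          (Ico (P.pts j) (P.pts (j + 1))).indicator (g j) s :=
        Finset.sum_nonneg fun j _ => hgnn j s
      have h2 : 0 ≤ s ^ (-(4 * α)) := Real.rpow_nonneg hs0.le _
      have h3 : 0 ≤ P.mesh ^ (2 * (lam - α)) := Real.rpow_nonneg hm0 _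
      have : 0 ≤ G s := mul_nonneg h3 (by linarith)
      simpa using this
  refine step1.trans ?_
  have hS : ∫ s in (0:ℝ)..T, (∑ i ∈ Finset.range P.n,
      (Ico (P.pts i) (P.pts (i + 1))).indicator (g i) s) ≤ T / (1 - 4 * α) := by
    rw [intervalIntegral.integral_of_le hT.le]
    refine (setIntegral_le_integral
      (integrable_finsetSum _ fun i hi => hgint i (Finset.mem_range.mp hi))
      (Filter.Eventually.of_forall fun s => Finset.sum_nonneg fun j _ => hgnn j s)).trans ?_
    rw [integral_finsetSum _ fun i hi => hgint i (Finset.mem_range.mp hi),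
      Finset.sum_congr rfl fun i hi => hgval i (Finset.mem_range.mp hi),
      ← Finset.sum_div, Finset.sum_range_sub, P.first, P.last, sub_zero]
  have hp : ∫ s in (0:ℝ)..T, s ^ (-(4 * α)) = T ^ (1 - 4 * α) / (1 - 4 * α) := by
    rw [integral_rpow (Or.inl h4), Real.zero_rpow (by linarith), sub_zero]
    have : -(4 * α) + 1 = 1 - 4 * α := by ring
    rw [this]
  simp only [hG]
  rw [intervalIntegral.integral_const_mul, intervalIntegral.integral_div,
    intervalIntegral.integral_add hsumI hpI, hp, mul_comm]
  refine mul_le_mul_of_nonneg_right ?_ (Real.rpow_nonneg hm0 _)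
  linarith

end YS
end
end
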